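/- Let ν denote the standard Gaussian-type measure dν_{x₀;t}(x) = (4π(t₀−t))^{−n/2} e^{−|x−x₀|²/(4(t₀−t))} dx and f_{x₀}(x) = |x−x₀|²/(4(t₀−t)). Fix α > 0 and a nonnegative integer m. There is a constant C = C(n) such that for every polynomial p on ℝⁿ of degree at most m and every x₀, t < t₀: ∫ p² dν_{x₀;t} ≤ e^{Cα(1+m)} ∫ p² e^{−α f_{x₀}} dν_{x₀;t}. -/

import Mathlib

open MeasureTheory

noncomputable section

/-- The conjugate heat kernel (Gaussian) measure on `ℝⁿ` centered at `x₀` with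
variance parameter `τ`: `ν_{x₀; t₀−τ}` (density `(4πτ)^{−n/2} e^{−|x−x₀|²/(4τ)}`). -/
def gmeas (n : ℕ) (x₀ : EuclideanSpace ℝ (Fin n)) (τ : ℝ) :
    Measure (EuclideanSpace ℝ (Fin n)) :=
  volume.withDensity fun x =>
    ENNReal.ofReal ((4 * Real.pi * τ) ^ (-(n : ℝ) / 2) * Real.exp (-‖x - x₀‖ ^ 2 / (4 * τ)))

/-!
Let `L q = ∫ q dν` for polynomials `q`. Integration by parts gives `L (∂ᵢ q) = L (y q)` with
`y = (xᵢ - x₀ᵢ) / (2τ)`, so `∂ᵢ` has adjoint `q ↦ y q - ∂ᵢ q`, and `∂ᵢ y = s = 1 / (2τ)` is the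
commutation relation of annihilation and creation operators. Since `∂ᵢ` is nilpotent on
polynomials of degree at most `m`, these relations alone yield
`L ((∂ᵢ p)²) ≤ s m L (p²)`, with no expansion in Hermite polynomials. Hence
`L ((y p)²) ≤ s (4m + 2) L (p²)`, which summed over `i` is `∫ f p² dν ≤ n (2m + 1) ∫ p² dν`.
The theorem then follows by Jensen's inequality for `exp` and the measure `p² dν`.
-/

-- This is Jensen's inequality for the probability measure proportional to `w dμ`.
theorem integral_le_exp_mul_integral_mul_exp_neg {X : Type*} [MeasurableSpace X] {μ : Measure X}
    {f w : X → ℝ} {c α : ℝ} (hα : 0 ≤ α) (hw : ∀ x, 0 ≤ w x) (hw_int : Integrable w μ)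
    (hfw_int : Integrable (fun x ↦ f x * w x) μ)
    (hexp_int : Integrable (fun x ↦ w x * Real.exp (-α * f x)) μ)
    (hfw : ∫ x, f x * w x ∂μ ≤ c * ∫ x, w x ∂μ) :
    ∫ x, w x ∂μ ≤ Real.exp (c * α) * ∫ x, w x * Real.exp (-α * f x) ∂μ := by
  have pointwise (x : X) : (1 + α * c) * w x - α * (f x * w x) ≤
      Real.exp (c * α) * (w x * Real.exp (-α * f x)) := by
    have tangent := mul_le_mul_of_nonneg_left (Real.add_one_le_exp (c * α + -α * f x)) (hw x)
    rw [Real.exp_add] at tangent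
    linarith
  have moment := mul_le_mul_of_nonneg_left hfw hα
  calc ∫ x, w x ∂μ
      ≤ (1 + α * c) * ∫ x, w x ∂μ - α * ∫ x, f x * w x ∂μ := by linarith
    _ = ∫ x, ((1 + α * c) * w x - α * (f x * w x)) ∂μ := by
      rw [integral_sub (hw_int.const_mul _) (hfw_int.const_mul _), integral_const_mul,
        integral_const_mul]
    _ ≤ Real.exp (c * α) * ∫ x, w x * Real.exp (-α * f x) ∂μ := by
      rw [← integral_const_mul]
      exact integral_mono ((hw_int.const_mul _).sub (hfw_int.const_mul _))
        (hexp_int.const_mul _) pointwise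

section IntegrationByParts

variable {A : Type*} [CommRing A] [Algebra ℝ A]

/-- A linear functional `L` that is nonnegative on squares and for which the derivation `D`
satisfies the integration by parts formula of a Gaussian expectation, in which `-y` is the
logarithmic derivative of the density. The model is `L q = ∫ q e^{-s x² / 2} dx` on `ℝ[x]`,
where `D = d/dx` and `y = s x`. -/
structure IsGaussianFunctional (L : A →ₗ[ℝ] ℝ) (D : Derivation ℝ A A) (y : A) (s : ℝ) : Prop where
  map_mul_self_nonneg : ∀ q, 0 ≤ L (q * q)
  map_deriv : ∀ q, L (D q) = L (y * q)
  deriv_eq : D y = algebraMap ℝ A s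

/-- The creation operator `q ↦ y q - D q`, which is the formal adjoint of the derivation `D` for
the pairing `(p, q) ↦ L (p q)` of a Gaussian functional `L`. -/
def creation (D : Derivation ℝ A A) (y q : A) : A := y * q - D q

namespace IsGaussianFunctional

variable {L : A →ₗ[ℝ] ℝ} {D : Derivation ℝ A A} {y : A} {s : ℝ}

theorem map_mul_creation (h : IsGaussianFunctional L D y s) (p q : A) :
    L (p * creation D y q) = L (D p * q) := by
  have parts : L (p * D q + q * D p) = L (y * (p * q)) := by
    rw [← h.map_deriv, D.leibniz, smul_eq_mul, smul_eq_mul]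
  have expand : p * creation D y q = y * (p * q) - p * D q := by
    rw [creation]
    ring
  rw [expand, map_sub, ← parts, map_add, add_sub_cancel_left, mul_comm]

theorem deriv_creation (h : IsGaussianFunctional L D y s) (q : A) :
    D (creation D y q) = s • q + creation D y (D q) := by
  simp only [creation, map_sub, D.leibniz, h.deriv_eq, smul_eq_mul, Algebra.smul_def]
  ring

theorem map_creation_mul_self (h : IsGaussianFunctional L D y s) (q : A) :
    L (creation D y q * creation D y q) = s * L (q * q) + L (D q * D q) := by
  rw [h.map_mul_creation, h.deriv_creation, add_mul, map_add, smul_mul_assoc, map_smul,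
    smul_eq_mul, mul_comm (creation D y (D q)), h.map_mul_creation]

theorem map_deriv_mul_self_le_of_map_creation_le (h : IsGaussianFunctional L D y s) {c : ℝ}
    (hc : 0 < c) {p : A}
    (hp : L (creation D y (D p) * creation D y (D p)) ≤ c * L (D p * D p)) :
    L (D p * D p) ≤ c * L (p * p) := by
  have square : (creation D y (D p) - c • p) * (creation D y (D p) - c • p) =
      creation D y (D p) * creation D y (D p) - (2 * c) • (p * creation D y (D p)) +
        (c * c) • (p * p) := by
    simp only [Algebra.smul_def, map_mul, map_ofNat]
    ring
  have nonneg := h.map_mul_self_nonneg (creation D y (D p) - c • p)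
  simp only [square, map_add, map_sub, map_smul, smul_eq_mul, h.map_mul_creation] at nonneg
  rw [h.map_mul_creation] at hp
  refine le_of_mul_le_mul_left ?_ hc
  linarith

theorem map_deriv_mul_self_le (h : IsGaussianFunctional L D y s) (hs : 0 < s) {m : ℕ} {p : A}
    (hp : D^[m + 1] p = 0) : L (D p * D p) ≤ s * m * L (p * p) := by
  induction m generalizing p with
  | zero =>
    replace hp : D p = 0 := hp
    simp [hp]
  | succ m ih =>
    refine h.map_deriv_mul_self_le_of_map_creation_le (by positivity) ?_
    have second_deriv := ih (p := D p) hp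
    rw [h.map_creation_mul_self]
    push_cast
    linarith

theorem map_mul_mul_self_le (h : IsGaussianFunctional L D y s) (hs : 0 < s) {m : ℕ} {p : A}
    (hp : D^[m + 1] p = 0) : L (y * p * (y * p)) ≤ s * (4 * m + 2) * L (p * p) := by
  have parallelogram : y * p * (y * p) =
      (2 : ℝ) • (creation D y p * creation D y p) + (2 : ℝ) • (D p * D p) -
        (creation D y p - D p) * (creation D y p - D p) := by
    simp only [creation, Algebra.smul_def, map_ofNat]
    ring
  have nonneg := h.map_mul_self_nonneg (creation D y p - D p)
  have bernstein := h.map_deriv_mul_self_le hs hp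
  rw [parallelogram, map_sub, map_add, map_smul, map_smul, h.map_creation_mul_self, smul_eq_mul,
    smul_eq_mul]
  linarith

end IsGaussianFunctional

end IntegrationByParts

section Polynomial

open MvPolynomial Asymptotics

theorem iterate_pderiv_eq_zero {σ R : Type*} [CommSemiring R] {i : σ} {k : ℕ}
    {p : MvPolynomial σ R} (hp : ∀ d ∈ p.support, d i < k) : (pderiv i)^[k] p = 0 := by
  induction k generalizing p with
  | zero => exact support_eq_empty.1 (Finset.eq_empty_of_forall_notMem fun d hd ↦ by
      simpa using hp d hd)
  | succ k ih =>
    refine ih fun d hd ↦ ?_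
    rw [mem_support_iff, coeff_pderiv] at hd
    simpa using hp _ (mem_support_iff.2 (left_ne_zero_of_mul hd))

variable {ι : Type*}

theorem continuous_eval_euclidean (q : MvPolynomial ι ℝ) :
    Continuous fun x : EuclideanSpace ℝ ι ↦ eval x.ofLp q :=
  q.continuous_eval.comp (by fun_prop)

theorem hasLineDerivAt_eval [DecidableEq ι] (q : MvPolynomial ι ℝ) (i : ι)
    (x : EuclideanSpace ℝ ι) :
    HasLineDerivAt ℝ (fun x : EuclideanSpace ℝ ι ↦ eval x.ofLp q) (eval x.ofLp (pderiv i q)) x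
      (EuclideanSpace.single i 1) := by
  unfold HasLineDerivAt
  induction q using MvPolynomial.induction_on with
  | C r => simpa using hasDerivAt_const (0 : ℝ) r
  | add p q hp hq => simpa [Pi.add_def] using hp.add hq
  | mul_X p j hp =>
    have coordinate : HasDerivAt (fun t : ℝ ↦ (x + t • EuclideanSpace.single i (1 : ℝ)) j)
        (eval x.ofLp (pderiv i (X j : MvPolynomial ι ℝ))) 0 := by
      rcases eq_or_ne j i with rfl | hji
      · simpa using (hasDerivAt_id (0 : ℝ)).const_add (x j)
      · simpa [hji] using hasDerivAt_const (0 : ℝ) (x j)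
    have product := hp.mul coordinate
    simp only [pderiv_mul, map_mul, map_add, eval_X] at product ⊢
    simpa [Pi.mul_def] using product

theorem isBigO_one_exp_mul_norm_sub_sq {E : Type*} [SeminormedAddCommGroup E] (a : E) {c : ℝ}
    (hc : 0 ≤ c) : (fun _ : E ↦ (1 : ℝ)) =O[⊤] fun x ↦ Real.exp (c * ‖x - a‖ ^ 2) := by
  refine IsBigO.of_norm_le fun x ↦ ?_
  rw [norm_one]
  exact Real.one_le_exp (by positivity)

theorem isBigO_norm_sub_exp_mul_norm_sub_sq {E : Type*} [SeminormedAddCommGroup E] (a : E) {c : ℝ}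
    (hc : 0 < c) : (fun x : E ↦ ‖x - a‖) =O[⊤] fun x ↦ Real.exp (c * ‖x - a‖ ^ 2) := by
  refine IsBigO.of_bound (1 + c⁻¹) (Filter.Eventually.of_forall fun x ↦ ?_)
  rw [norm_norm, Real.norm_of_nonneg (Real.exp_pos _).le]
  have exp_bound := Real.add_one_le_exp (c * ‖x - a‖ ^ 2)
  calc ‖x - a‖ ≤ 1 + ‖x - a‖ ^ 2 := by nlinarith [sq_nonneg (‖x - a‖ - 1)]
    _ ≤ (1 + c⁻¹) * (c * ‖x - a‖ ^ 2 + 1) := by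
      have : (1 + c⁻¹) * (c * ‖x - a‖ ^ 2 + 1) =
          1 + ‖x - a‖ ^ 2 + (c * ‖x - a‖ ^ 2 + c⁻¹) := by
        field_simp
        ring
      rw [this]
      exact le_add_of_nonneg_right (by positivity)
    _ ≤ (1 + c⁻¹) * Real.exp (c * ‖x - a‖ ^ 2) := by gcongr

variable [Fintype ι]

theorem isBigO_eval_exp_mul_norm_sub_sq (a : EuclideanSpace ℝ ι) (q : MvPolynomial ι ℝ) {c : ℝ}
    (hc : 0 < c) :
    (fun x : EuclideanSpace ℝ ι ↦ eval x.ofLp q) =O[⊤] fun x ↦ Real.exp (c * ‖x - a‖ ^ 2) := by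
  have constants (r c : ℝ) (hc : 0 < c) :
      (fun _ : EuclideanSpace ℝ ι ↦ r) =O[⊤] fun x ↦ Real.exp (c * ‖x - a‖ ^ 2) := by
    simpa using (isBigO_one_exp_mul_norm_sub_sq a hc.le).const_mul_left r
  induction q using MvPolynomial.induction_on generalizing c with
  | C r => simpa using constants r c hc
  | add p q hp hq => simpa using (hp hc).add (hq hc)
  | mul_X p i hp =>
    have deviation : (fun x : EuclideanSpace ℝ ι ↦ x i - a i) =O[⊤]
        fun x ↦ Real.exp (c / 2 * ‖x - a‖ ^ 2) :=
      (IsBigO.of_norm_le fun x ↦ PiLp.norm_apply_le (x - a) i).trans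
        (isBigO_norm_sub_exp_mul_norm_sub_sq a (half_pos hc))
    have coordinate := deviation.add (constants (a i) (c / 2) (half_pos hc))
    refine ((hp (half_pos hc)).mul coordinate).congr (fun x ↦ by simp) fun x ↦ ?_
    rw [← Real.exp_add]
    ring_nf

end Polynomial

section LebesgueIntegral

open MvPolynomial Asymptotics

theorem integrable_exp_neg_mul_norm_sub_sq {V : Type*} [NormedAddCommGroup V]
    [InnerProductSpace ℝ V] [FiniteDimensional ℝ V] [MeasurableSpace V] [BorelSpace V] (a : V)
    {b : ℝ} (hb : 0 < b) : Integrable fun x : V ↦ Real.exp (-b * ‖x - a‖ ^ 2) := by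
  have centered : Integrable fun x : V ↦ Real.exp (-b * ‖x‖ ^ 2) := by
    refine Integrable.of_integral_ne_zero ?_
    rw [GaussianFourier.integral_rexp_neg_mul_sq_norm hb]
    positivity
  exact centered.comp_sub_right a

variable {ι : Type*} [Fintype ι]

theorem integrable_eval_mul_exp (a : EuclideanSpace ℝ ι) {b : ℝ} (hb : 0 < b)
    (q : MvPolynomial ι ℝ) :
    Integrable fun x : EuclideanSpace ℝ ι ↦ eval x.ofLp q * Real.exp (-b * ‖x - a‖ ^ 2) := by
  have meas : AEStronglyMeasurable fun x : EuclideanSpace ℝ ι ↦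
      eval x.ofLp q * Real.exp (-b * ‖x - a‖ ^ 2) :=
    ((continuous_eval_euclidean q).mul (by fun_prop)).aestronglyMeasurable
  refine IsBigO.integrable meas ?_ (integrable_exp_neg_mul_norm_sub_sq a (half_pos hb))
  refine ((isBigO_eval_exp_mul_norm_sub_sq a q (half_pos hb)).mul
    (isBigO_refl (fun x ↦ Real.exp (-b * ‖x - a‖ ^ 2)) ⊤)).congr_right fun x ↦ ?_
  rw [← Real.exp_add]
  ring_nf

theorem hasLineDerivAt_exp_neg_mul_norm_sub_sq {V : Type*} [NormedAddCommGroup V]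
    [InnerProductSpace ℝ V] (a x v : V) (b : ℝ) :
    HasLineDerivAt ℝ (fun x ↦ Real.exp (-b * ‖x - a‖ ^ 2))
      (-(2 * b * inner ℝ (x - a) v) * Real.exp (-b * ‖x - a‖ ^ 2)) x v := by
  have line : HasDerivAt (fun t : ℝ ↦ x + t • v - a) v 0 := by
    simpa using (((hasDerivAt_id (0 : ℝ)).smul_const v).const_add x).sub_const a
  refine (line.norm_sq.const_mul (-b)).exp.congr_deriv ?_
  simp only [zero_smul, add_zero]
  ring

theorem integral_eval_pderiv_mul_exp (a : EuclideanSpace ℝ ι) {b : ℝ} (hb : 0 < b) (i : ι)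
    (q : MvPolynomial ι ℝ) :
    ∫ x : EuclideanSpace ℝ ι, eval x.ofLp (pderiv i q) * Real.exp (-b * ‖x - a‖ ^ 2) =
      ∫ x : EuclideanSpace ℝ ι,
        eval x.ofLp (C (2 * b) * (X i - C (a i)) * q) * Real.exp (-b * ‖x - a‖ ^ 2) := by
  classical
  have weight_deriv (x : EuclideanSpace ℝ ι) :
      eval x.ofLp q * (-(2 * b * inner ℝ (x - a) (EuclideanSpace.single i 1)) *
        Real.exp (-b * ‖x - a‖ ^ 2)) =
      -(eval x.ofLp (C (2 * b) * (X i - C (a i)) * q) * Real.exp (-b * ‖x - a‖ ^ 2)) := by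
    simp only [EuclideanSpace.inner_single_right, PiLp.sub_apply, Real.ringHom_apply, map_mul,
      map_sub, eval_C, eval_X]
    ring
  have parts := integral_bilinear_hasLineDerivAt_right_eq_neg_left_of_integrable
    (μ := volume) (B := ContinuousLinearMap.mul ℝ ℝ)
    (integrable_eval_mul_exp a hb (pderiv i q))
    (by
      simp only [ContinuousLinearMap.mul_apply', weight_deriv]
      exact (integrable_eval_mul_exp a hb _).neg)
    (integrable_eval_mul_exp a hb q)
    (fun x _ ↦ hasLineDerivAt_eval q i x)
    (fun x _ ↦ hasLineDerivAt_exp_neg_mul_norm_sub_sq a x (EuclideanSpace.single i 1) b)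
  simp only [ContinuousLinearMap.mul_apply', weight_deriv, integral_neg] at parts
  exact (neg_injective parts).symm

end LebesgueIntegral

section GaussianMeasure

open MvPolynomial

variable {n : ℕ} {a : EuclideanSpace ℝ (Fin n)} {τ : ℝ}

theorem toReal_gmeas_density (hτ : 0 < τ) (x : EuclideanSpace ℝ (Fin n)) :
    (ENNReal.ofReal
      ((4 * Real.pi * τ) ^ (-(n : ℝ) / 2) * Real.exp (-‖x - a‖ ^ 2 / (4 * τ)))).toReal =
      (4 * Real.pi * τ) ^ (-(n : ℝ) / 2) * Real.exp (-(4 * τ)⁻¹ * ‖x - a‖ ^ 2) := by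
  rw [ENNReal.toReal_ofReal (by positivity)]
  ring_nf

theorem integral_gmeas (hτ : 0 < τ) (g : EuclideanSpace ℝ (Fin n) → ℝ) :
    ∫ x, g x ∂(gmeas n a τ) =
      (4 * Real.pi * τ) ^ (-(n : ℝ) / 2) * ∫ x, g x * Real.exp (-(4 * τ)⁻¹ * ‖x - a‖ ^ 2) := by
  rw [gmeas, integral_withDensity_eq_integral_toReal_smul (by fun_prop)
    (Filter.Eventually.of_forall fun _ ↦ ENNReal.ofReal_lt_top), ← integral_const_mul]
  simp only [toReal_gmeas_density hτ, smul_eq_mul]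
  exact integral_congr_ae (Filter.Eventually.of_forall fun x ↦ by ring)

theorem integrable_eval_gmeas (hτ : 0 < τ) (q : MvPolynomial (Fin n) ℝ) :
    Integrable (fun x ↦ eval x.ofLp q) (gmeas n a τ) := by
  rw [gmeas, integrable_withDensity_iff (by fun_prop)
    (Filter.Eventually.of_forall fun _ ↦ ENNReal.ofReal_lt_top)]
  simp only [toReal_gmeas_density hτ, mul_left_comm]
  exact (integrable_eval_mul_exp a (by positivity) q).const_mul _

/-- The integral against `gmeas n a τ`, as a linear functional on polynomials. -/
def gaussianIntegral (a : EuclideanSpace ℝ (Fin n)) (hτ : 0 < τ) :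
    MvPolynomial (Fin n) ℝ →ₗ[ℝ] ℝ where
  toFun q := ∫ x, eval x.ofLp q ∂(gmeas n a τ)
  map_add' p q := by
    simp only [map_add]
    exact integral_add (integrable_eval_gmeas hτ p) (integrable_eval_gmeas hτ q)
  map_smul' r q := by
    simp only [smul_eval, integral_const_mul, RingHom.id_apply, smul_eq_mul]

theorem gaussianIntegral_apply (hτ : 0 < τ) (q : MvPolynomial (Fin n) ℝ) :
    gaussianIntegral a hτ q = ∫ x, eval x.ofLp q ∂(gmeas n a τ) := rfl

theorem isGaussianFunctional_gaussianIntegral (hτ : 0 < τ) (i : Fin n) :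
    IsGaussianFunctional (gaussianIntegral a hτ) (pderiv i)
      (C (2 * τ)⁻¹ * (X i - C (a i))) (2 * τ)⁻¹ where
  map_mul_self_nonneg q := integral_nonneg fun x ↦ by
    rw [map_mul]
    exact mul_self_nonneg _
  map_deriv q := by
    have slope : (2 * τ)⁻¹ = 2 * (4 * τ)⁻¹ := by
      field_simp
      norm_num
    rw [gaussianIntegral_apply, gaussianIntegral_apply, integral_gmeas hτ, integral_gmeas hτ, slope,
      integral_eval_pderiv_mul_exp a (by positivity) i q]
  deriv_eq := by simp [algebraMap_eq]

theorem integral_sub_apply_sq_mul_eval_sq_le (hτ : 0 < τ) {m : ℕ} {p : MvPolynomial (Fin n) ℝ}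
    (i : Fin n) (hp : p.degreeOf i ≤ m) :
    ∫ x, (x i - a i) ^ 2 / (4 * τ) * eval x.ofLp p ^ 2 ∂(gmeas n a τ) ≤
      (2 * m + 1) * ∫ x, eval x.ofLp p ^ 2 ∂(gmeas n a τ) := by
  have nilpotent : (pderiv i)^[m + 1] p = 0 := iterate_pderiv_eq_zero fun d hd ↦
    Nat.lt_succ_of_le ((monomial_le_degreeOf i hd).trans hp)
  have bound := (isGaussianFunctional_gaussianIntegral (a := a) hτ i).map_mul_mul_self_le
    (by positivity) nilpotent
  set y : MvPolynomial (Fin n) ℝ := C (2 * τ)⁻¹ * (X i - C (a i)) with hy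
  have eval_sq (x : EuclideanSpace ℝ (Fin n)) :
      (x i - a i) ^ 2 / (4 * τ) * eval x.ofLp p ^ 2 = τ * eval x.ofLp (y * p * (y * p)) := by
    simp only [hy, map_mul, map_sub, eval_C, eval_X]
    field_simp
    ring
  calc ∫ x, (x i - a i) ^ 2 / (4 * τ) * eval x.ofLp p ^ 2 ∂(gmeas n a τ)
      = τ * gaussianIntegral a hτ (y * p * (y * p)) := by
        simp only [eval_sq, integral_const_mul, gaussianIntegral_apply]
    _ ≤ τ * ((2 * τ)⁻¹ * (4 * m + 2) * gaussianIntegral a hτ (p * p)) := by gcongr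
    _ = (2 * m + 1) * ∫ x, eval x.ofLp p ^ 2 ∂(gmeas n a τ) := by
        simp only [gaussianIntegral_apply, ← pow_two, map_pow]
        field_simp
        ring

theorem integrable_sub_apply_sq_mul_eval_sq (hτ : 0 < τ) (p : MvPolynomial (Fin n) ℝ)
    (i : Fin n) :
    Integrable (fun x ↦ (x i - a i) ^ 2 / (4 * τ) * eval x.ofLp p ^ 2) (gmeas n a τ) := by
  convert integrable_eval_gmeas hτ (C (4 * τ)⁻¹ * (X i - C (a i)) ^ 2 * p ^ 2) using 2 with x
  simp only [map_mul, map_pow, map_sub, eval_C, eval_X, div_eq_inv_mul]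

theorem norm_sub_sq_div_mul_eq_sum (a x : EuclideanSpace ℝ (Fin n)) (τ r : ℝ) :
    ‖x - a‖ ^ 2 / (4 * τ) * r = ∑ i, (x i - a i) ^ 2 / (4 * τ) * r := by
  simp [EuclideanSpace.real_norm_sq_eq, Finset.sum_div, Finset.sum_mul]

theorem integrable_norm_sub_sq_mul_eval_sq (hτ : 0 < τ) (p : MvPolynomial (Fin n) ℝ) :
    Integrable (fun x ↦ ‖x - a‖ ^ 2 / (4 * τ) * eval x.ofLp p ^ 2) (gmeas n a τ) := by
  simp only [norm_sub_sq_div_mul_eq_sum]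
  exact integrable_finsetSum _ fun i _ ↦ integrable_sub_apply_sq_mul_eval_sq hτ p i

theorem integral_norm_sub_sq_mul_eval_sq_le (hτ : 0 < τ) {m : ℕ} {p : MvPolynomial (Fin n) ℝ}
    (hp : ∀ i, p.degreeOf i ≤ m) :
    ∫ x, ‖x - a‖ ^ 2 / (4 * τ) * eval x.ofLp p ^ 2 ∂(gmeas n a τ) ≤
      n * (2 * m + 1) * ∫ x, eval x.ofLp p ^ 2 ∂(gmeas n a τ) := by
  simp only [norm_sub_sq_div_mul_eq_sum]
  rw [integral_finsetSum _ fun i _ ↦ integrable_sub_apply_sq_mul_eval_sq hτ p i]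
  refine (Finset.sum_le_sum fun i _ ↦
    integral_sub_apply_sq_mul_eval_sq_le hτ i (hp i)).trans_eq ?_
  simp [mul_assoc]

theorem integrable_eval_sq_gmeas (hτ : 0 < τ) (p : MvPolynomial (Fin n) ℝ) :
    Integrable (fun x ↦ eval x.ofLp p ^ 2) (gmeas n a τ) := by
  simp only [← map_pow]
  exact integrable_eval_gmeas hτ (p ^ 2)

theorem integrable_eval_sq_mul_exp_gmeas (hτ : 0 < τ) (p : MvPolynomial (Fin n) ℝ) {α : ℝ}
    (hα : 0 ≤ α) :
    Integrable (fun x ↦ eval x.ofLp p ^ 2 * Real.exp (-α * (‖x - a‖ ^ 2 / (4 * τ))))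
      (gmeas n a τ) := by
  have weight_le_one (x : EuclideanSpace ℝ (Fin n)) :
      Real.exp (-α * (‖x - a‖ ^ 2 / (4 * τ))) ≤ 1 := by
    rw [Real.exp_le_one_iff, neg_mul, neg_nonpos]
    positivity
  have meas : Continuous fun x : EuclideanSpace ℝ (Fin n) ↦
      eval x.ofLp p ^ 2 * Real.exp (-α * (‖x - a‖ ^ 2 / (4 * τ))) :=
    ((continuous_eval_euclidean p).pow 2).mul (by fun_prop)
  refine (integrable_eval_sq_gmeas hτ p).mono' meas.aestronglyMeasurable
    (Filter.Eventually.of_forall fun x ↦ ?_)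
  rw [Real.norm_of_nonneg (by positivity)]
  exact mul_le_of_le_one_right (sq_nonneg _) (weight_le_one x)

end GaussianMeasure

/-- Weighted `L²` comparability for polynomials against Gaussians: there is `C = C(n)`
such that for every `α > 0`, every nonnegative integer `m`, every polynomial `p` on `ℝⁿ`
of degree at most `m`, and every base point `x₀`, `t < t₀`:
`∫ p² dν_{x₀;t} ≤ e^{Cα(1+m)} ∫ p² e^{−α f_{x₀}} dν_{x₀;t}`,
where `f_{x₀}(x) = |x−x₀|²/(4(t₀−t))`. -/
theorem statement_12 (n : ℕ) :
    ∃ C : ℝ, 0 < C ∧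
    ∀ α : ℝ, 0 < α → ∀ (m : ℕ) (P : MvPolynomial (Fin n) ℝ), P.totalDegree ≤ m →
    ∀ (x₀ : EuclideanSpace ℝ (Fin n)) (t t₀ : ℝ), t < t₀ →
      ∫ x, (MvPolynomial.eval (fun i => x i) P) ^ 2 ∂(gmeas n x₀ (t₀ - t))
        ≤ Real.exp (C * α * (1 + (m : ℝ))) *
          ∫ x, (MvPolynomial.eval (fun i => x i) P) ^ 2 *
            Real.exp (-α * (‖x - x₀‖ ^ 2 / (4 * (t₀ - t)))) ∂(gmeas n x₀ (t₀ - t)) := by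
  refine ⟨2 * n + 1, by positivity, fun α hα m P hP x₀ t t₀ ht ↦ ?_⟩
  have hτ : 0 < t₀ - t := sub_pos.2 ht
  have moment := integral_norm_sub_sq_mul_eval_sq_le (a := x₀) hτ fun i ↦
    (P.degreeOf_le_totalDegree i).trans hP
  rw [mul_right_comm]
  refine integral_le_exp_mul_integral_mul_exp_neg hα.le (fun x ↦ sq_nonneg _)
    (integrable_eval_sq_gmeas hτ P) (integrable_norm_sub_sq_mul_eval_sq hτ P)
    (integrable_eval_sq_mul_exp_gmeas hτ P hα.le) (moment.trans ?_)
  refine mul_le_mul_of_nonneg_right ?_ (integral_nonneg fun x ↦ sq_nonneg _)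
  linarith
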